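/- arXiv:1602.06685 — 2 statements merged into one kernel-verified Lean document; each statement's English description precedes it below -/
import Mathlib

section
/- Assume the (NA) condition. Then for every 0 ≤ t ≤ T−1 there exists a set Ω^t_{NA1} ∈ ℱ_t with P_t(Ω^t_{NA1}) = 1 such that for every ω^t ∈ Ω^t_{NA1}: (i) 0 ∈ D^{t+1}(ω^t), i.e., D^{t+1}(ω^t) is a vector subspace of ℝ^d; (ii) for every h ∈ ℝ^d, if q_{t+1}(h·ΔS_{t+1}(ω^t,·) ≥ 0 | ω^t) = 1 then q_{t+1}(h·ΔS_{t+1}(ω^t,·) = 0 | ω^t) = 1; (iii) for every h ∈ D^{t+1}(ω^t), if q_{t+1}(h·ΔS_{t+1}(ω^t,·) ≥ 0 | ω^t) = 1 then h = 0. -/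
/-!
Fix `t` and a history `ω`. The portfolios `h` whose payoff `h · ΔS_{t+1}(ω, ·)` is nonnegative
`q_{t+1}(· | ω)`-a.s. form a closed convex cone `C(ω)`. Let `b(ω)` be the conditional mean of the
bounded vector `ΔS / (1 + ‖ΔS‖)`, which gives payoffs of the same sign as `ΔS`. For `h ∈ C(ω)` one
has `h · b(ω) ≥ 0`, with equality iff the payoff of `h` vanishes a.s. Hence the metric projection
`p(ω)` of `b(ω)` onto `C(ω)` is zero iff `C(ω)` contains no one-period arbitrage, and otherwise
`p(ω)` is one (`exists_measurable_candidate`).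

The point is that `p` is measurable for `ℱ_t` itself, with no completion and no assumption on the
spaces `Ω_s`. The cone `C(ω)` is the zero set of the expected shortfall `G(ω, h)`, which is measurable in
`ω` and continuous in `h`, and `p(ω)` is the limit of approximate minimisers of
`‖h - b(ω)‖² + n G(ω, h)` picked from a dense sequence (`measurable_projection`).

So `Ω^t_{NA1} := {p = 0}` is measurable and satisfies (ii). Applying (NA) to the strategy that holds
`p` over the period after `t` and nothing otherwise shows that it has full measure
(`NAcond.one_period`).

Properties (i) and (iii) follow from (ii) for each fixed `ω`. If `0 ∉ D(ω)`, the point of `D(ω)`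
closest to `0` is an arbitrage (`zero_mem_affineSpan_support`). If `h ∈ D(ω)` has nonnegative payoff,
then by (ii) it is a.s. orthogonal to `ΔS`, hence to the support, hence to `D(ω)`, hence to itself
(`eq_zero_of_mem_affineSpan_support`).
-/

open MeasureTheory ProbabilityTheory Set
open scoped ENNReal InnerProductSpace

noncomputable section

/-- `d`-dimensional Euclidean space `ℝ^d`. -/
abbrev Evec (d : ℕ) : Type := EuclideanSpace ℝ (Fin d)

/-- The history space `Ω^t = Ω_1 × ⋯ × Ω_t` (with `Ω^0` a one-point space). -/
def Hist (Ωs : ℕ → Type) : ℕ → Type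
  | 0 => PUnit
  | t + 1 => Hist Ωs t × Ωs (t + 1)

/-- The product σ-algebra `ℱ_t = 𝒢_1 ⊗ ⋯ ⊗ 𝒢_t` on `Ω^t`. -/
instance histMS (Ωs : ℕ → Type) [m : ∀ t, MeasurableSpace (Ωs t)] :
    ∀ t, MeasurableSpace (Hist Ωs t)
  | 0 => inferInstanceAs (MeasurableSpace PUnit)
  | t + 1 => @Prod.instMeasurableSpace _ _ (histMS Ωs t) (m (t + 1))

variable {Ωs : ℕ → Type} [∀ t, MeasurableSpace (Ωs t)] {d : ℕ}

/-- The measures `P_t` on `Ω^t` obtained by iterated integration of the kernels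
`q_{s+1}` (here `q 0` applied to the unique point of `Ω^0` plays the role of `P_1`). -/
def Pmes (q : ∀ t, Kernel (Hist Ωs t) (Ωs (t + 1))) : ∀ t, Measure (Hist Ωs t)
  | 0 => Measure.dirac PUnit.unit
  | t + 1 => (Pmes q t).bind (fun ω => ((q t) ω).map (fun y => ((ω, y) : Hist Ωs (t + 1))))

/-- The price increment `ΔS_{t+1}(ω^t, ω_{t+1}) = S_{t+1}(ω^t,ω_{t+1}) − S_t(ω^t)`. -/
def deltaS (S : ∀ t, Hist Ωs t → Evec d) (t : ℕ) (ω : Hist Ωs t) (y : Ωs (t + 1)) : Evec d :=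
  S (t + 1) ((ω, y) : Hist Ωs (t + 1)) - S t ω

/-- The wealth process `V_t^{x,φ} = x + Σ_{s=1}^t φ_s · ΔS_s` (here `φ t` is the paper's
`φ_{t+1}`, the holding over the period `(t, t+1]`). -/
def Vval (S : ∀ t, Hist Ωs t → Evec d) (φ : ∀ t, Hist Ωs t → Evec d) (x : ℝ) :
    ∀ t, Hist Ωs t → ℝ
  | 0 => fun _ => x
  | t + 1 => fun ω => Vval S φ x t ω.1 + ⟪φ t ω.1, deltaS S t ω.1 ω.2⟫_ℝ

/-- The no-arbitrage condition (NA): if `V_T^{0,φ} ≥ 0` `P`-a.s. for a (predictable)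
strategy `φ`, then `V_T^{0,φ} = 0` `P`-a.s. -/
def NAcond (q : ∀ t, Kernel (Hist Ωs t) (Ωs (t + 1))) (S : ∀ t, Hist Ωs t → Evec d)
    (T : ℕ) : Prop :=
  ∀ φ : ∀ t, Hist Ωs t → Evec d, (∀ t, Measurable (φ t)) →
    (∀ᵐ ω ∂(Pmes q T), 0 ≤ Vval S φ 0 T ω) → (∀ᵐ ω ∂(Pmes q T), Vval S φ 0 T ω = 0)

/-- `D̃^{t+1}(ω^t)`: the support of the law of `ΔS_{t+1}(ω^t, ·)` under `q_{t+1}(·|ω^t)`,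
i.e. the intersection of all closed sets carrying full conditional measure. -/
def suppK (q : ∀ t, Kernel (Hist Ωs t) (Ωs (t + 1))) (S : ∀ t, Hist Ωs t → Evec d)
    (t : ℕ) (ω : Hist Ωs t) : Set (Evec d) :=
  ⋂₀ {A : Set (Evec d) | IsClosed A ∧ (q t) ω {y | deltaS S t ω y ∈ A} = 1}

/-- `D^{t+1}(ω^t)`: the affine hull of the support `D̃^{t+1}(ω^t)`. -/
def Dset (q : ∀ t, Kernel (Hist Ωs t) (Ωs (t + 1))) (S : ∀ t, Hist Ωs t → Evec d)
    (t : ℕ) (ω : Hist Ωs t) : Set (Evec d) :=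
  (affineSpan ℝ (suppK q S t ω) : Set (Evec d))

/-! ### Measurable projection onto a random closed convex set -/

/-- Approximate minimisers of the penalised distance `‖h - b‖² + n G h` converge to the metric
projection `p` of `b` onto the zero set of `G` (`p` being given by its variational inequality). -/
lemma tendsto_projection_of_penalised {E : Type*} [NormedAddCommGroup E] [InnerProductSpace ℝ E]
    [FiniteDimensional ℝ E] {b p : E} {G : E → ℝ} (hGc : Continuous G) (hG0 : ∀ h, 0 ≤ G h)
    (hp : ∀ h, G h = 0 → ⟪b - p, h - p⟫_ℝ ≤ 0) {u : ℕ → E}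
    (hu : ∀ n : ℕ, ‖u n - b‖ ^ 2 + n * G (u n) ≤ ‖p - b‖ ^ 2 + 1 / ((n : ℝ) + 1)) :
    Filter.Tendsto u Filter.atTop (nhds p) := by
  refine Filter.tendsto_of_subseq_tendsto fun ns hns => ?_
  have hinv : ∀ n : ℕ, 1 / ((n : ℝ) + 1) ≤ 1 := fun n => by
    rw [div_le_one (by positivity)]; linarith [n.cast_nonneg (α := ℝ)]
  have hdist : ∀ n, ‖u n - b‖ ^ 2 ≤ ‖p - b‖ ^ 2 + 1 / ((n : ℝ) + 1) := fun n => by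
    have := mul_nonneg n.cast_nonneg (hG0 (u n)) (α := ℝ)
    linarith [hu n]
  have hpen : ∀ n : ℕ, n * G (u n) ≤ ‖p - b‖ ^ 2 + 1 := fun n => by
    linarith [hu n, hinv n, sq_nonneg ‖u n - b‖]
  have hball : ∀ n, u (ns n) ∈ Metric.closedBall b (‖p - b‖ + 1) := fun n => by
    rw [mem_closedBall_iff_norm]
    have h1 := hdist (ns n)
    have h2 := hinv (ns n)
    refine abs_le_of_sq_le_sq' ?_ (by positivity) |>.2
    nlinarith [norm_nonneg (p - b)]
  have : ProperSpace E := FiniteDimensional.proper ℝ E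
  obtain ⟨a, -, ms, hms, hlim⟩ := (isCompact_closedBall b (‖p - b‖ + 1)).tendsto_subseq hball
  refine ⟨ms, ?_⟩
  have hsub : Filter.Tendsto (fun n => ns (ms n)) Filter.atTop Filter.atTop :=
    hns.comp hms.tendsto_atTop
  have hcast : Filter.Tendsto (fun n => ((ns (ms n) : ℕ) : ℝ)) Filter.atTop Filter.atTop :=
    tendsto_natCast_atTop_atTop.comp hsub
  have hGa : G a = 0 := by
    refine le_antisymm ?_ (hG0 a)
    refine le_of_tendsto_of_tendsto ((hGc.tendsto a).comp hlim)
      (hcast.const_div_atTop (‖p - b‖ ^ 2 + 1)) ?_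
    filter_upwards [hcast.eventually_gt_atTop 0] with n hn
    rw [le_div_iff₀ hn]
    have := hpen (ns (ms n))
    simp only [Function.comp] at this ⊢
    linarith
  have hda : ‖a - b‖ ^ 2 ≤ ‖p - b‖ ^ 2 := by
    have h1 : Filter.Tendsto (fun n => ‖u (ns (ms n)) - b‖ ^ 2) Filter.atTop
        (nhds (‖a - b‖ ^ 2)) := ((hlim.sub_const b).norm).pow 2
    have h2 : Filter.Tendsto (fun n => ‖p - b‖ ^ 2 + 1 / (((ns (ms n) : ℕ) : ℝ) + 1)) Filter.atTop
        (nhds (‖p - b‖ ^ 2 + 0)) :=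
      (tendsto_one_div_add_atTop_nhds_zero_nat.comp hsub).const_add _
    rw [add_zero] at h2
    exact le_of_tendsto_of_tendsto' h1 h2 fun n => hdist _
  have hap : a = p := by
    have h1 := hp a hGa
    have h2 : ‖a - b‖ ^ 2 = ‖a - p‖ ^ 2 - 2 * ⟪b - p, a - p⟫_ℝ + ‖p - b‖ ^ 2 := by
      rw [show a - b = (a - p) - (b - p) by abel, norm_sub_sq_real, real_inner_comm,
        norm_sub_rev p b]
    have h3 : ‖a - p‖ ^ 2 ≤ 0 := by linarith
    have h4 : ‖a - p‖ = 0 := by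
      have := sq_nonneg ‖a - p‖
      exact pow_eq_zero_iff two_ne_zero |>.1 (le_antisymm h3 this)
    exact sub_eq_zero.1 (norm_eq_zero.1 h4)
  rw [← hap]
  exact hlim

/-- If `G` is a Carathéodory function, the metric projection of `b ω` onto the zero set of `G ω`
is a measurable function of `ω`: it is a limit of approximate minimisers of penalised distances,
each of which is chosen as the first suitable element of a fixed dense sequence. -/
lemma measurable_projection {α E : Type*} [MeasurableSpace α] [NormedAddCommGroup E]
    [InnerProductSpace ℝ E] [FiniteDimensional ℝ E] [MeasurableSpace E] [BorelSpace E]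
    {b p : α → E} {G : α → E → ℝ} (hb : Measurable b) (hGm : ∀ h, Measurable fun ω => G ω h)
    (hGc : ∀ ω, Continuous (G ω)) (hG0 : ∀ ω h, 0 ≤ G ω h)
    (hp : ∀ ω h, G ω h = 0 → ⟪b ω - p ω, h - p ω⟫_ℝ ≤ 0) (hpG : ∀ ω, G ω (p ω) = 0) :
    Measurable p := by
  classical
  have : ProperSpace E := FiniteDimensional.proper ℝ E
  let r : ℕ → E := TopologicalSpace.denseSeq E
  let F : ℕ → α → E → ℝ := fun n ω h => ‖h - b ω‖ ^ 2 + n * G ω h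
  have hF0 : ∀ n ω h, 0 ≤ F n ω h := fun n ω h => by
    have := hG0 ω h
    positivity
  have hFc : ∀ n ω, Continuous (F n ω) := fun n ω => by
    have := hGc ω
    fun_prop
  have hFm : ∀ n h, Measurable fun ω => F n ω h := fun n h =>
    (((measurable_const.sub hb).norm).pow_const 2).add ((hGm h).const_mul _)
  have hex : ∀ (n : ℕ) (ω : α), ∃ k, ∀ j, F n ω (r k) ≤ F n ω (r j) + 1 / ((n : ℝ) + 1) := by
    intro n ω
    have hbdd : BddBelow (Set.range fun j => F n ω (r j)) :=
      ⟨0, by rintro _ ⟨j, rfl⟩; exact hF0 _ _ _⟩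
    obtain ⟨k, hk⟩ := exists_lt_of_ciInf_lt
      (lt_add_of_pos_right (⨅ j, F n ω (r j)) (by positivity : 0 < 1 / ((n : ℝ) + 1)))
    exact ⟨k, fun j => hk.le.trans (by have := ciInf_le hbdd j; gcongr)⟩
  refine measurable_of_tendsto_metrizable (f := fun n ω => r (Nat.find (hex n ω))) ?_ ?_
  · intro n
    refine Measurable.find (f := fun k _ => r k)
      (p := fun k ω => ∀ j, F n ω (r k) ≤ F n ω (r j) + 1 / ((n : ℝ) + 1))
      (fun k => measurable_const) (fun k => ?_) (hex n)
    simp only [Set.ofPred_forall]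
    exact MeasurableSet.iInter fun j => measurableSet_le (hFm n _) ((hFm n _).add_const _)
  · rw [tendsto_pi_nhds]
    intro ω
    refine tendsto_projection_of_penalised (hGc ω) (hG0 ω) (hp ω) fun n => ?_
    have hall : ∀ h, F n ω (r (Nat.find (hex n ω))) ≤ F n ω h + 1 / ((n : ℝ) + 1) := by
      intro h
      have hcl : IsClosed {h | F n ω (r (Nat.find (hex n ω))) ≤ F n ω h + 1 / ((n : ℝ) + 1)} :=
        isClosed_le continuous_const ((hFc n ω).add continuous_const)
      have hsub := hcl.closure_subset_iff.2
        (show Set.range r ⊆ _ by rintro _ ⟨j, rfl⟩; exact Nat.find_spec (hex n ω) j)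
      exact hsub (TopologicalSpace.denseRange_denseSeq E h)
    have := hall (p ω)
    simpa [F, hpG ω] using this

/-! ### A measurable candidate for a one-period arbitrage -/

/-- For a bounded random vector `g` there is a measurable choice `p` of one-period portfolios with
nonnegative payoff which is an arbitrage wherever one exists: `p ω` is the projection of the mean
`∫ g(ω, ·)` onto the closed convex cone of all portfolios with nonnegative payoff, so
`‖p ω‖² ≤ ⟪p ω, ∫ g(ω, ·)⟫`. -/
lemma exists_measurable_candidate {α β E : Type*} [MeasurableSpace α] [MeasurableSpace β]
    [NormedAddCommGroup E] [InnerProductSpace ℝ E] [FiniteDimensional ℝ E] [MeasurableSpace E]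
    [BorelSpace E] (κ : Kernel α β) [IsMarkovKernel κ] {g : α × β → E} (hg : Measurable g)
    (hg1 : ∀ x, ‖g x‖ ≤ 1) :
    ∃ p : α → E, Measurable p ∧ ∀ ω,
      (∀ᵐ y ∂(κ ω), 0 ≤ ⟪p ω, g (ω, y)⟫_ℝ) ∧
      ((∀ᵐ y ∂(κ ω), ⟪p ω, g (ω, y)⟫_ℝ = 0) → p ω = 0) ∧
      (p ω = 0 → ∀ h, (∀ᵐ y ∂(κ ω), 0 ≤ ⟪h, g (ω, y)⟫_ℝ) →
        ∀ᵐ y ∂(κ ω), ⟪h, g (ω, y)⟫_ℝ = 0) := by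
  have : ProperSpace E := FiniteDimensional.proper ℝ E
  have hgω : ∀ ω, Measurable fun y => g (ω, y) := fun ω => hg.comp measurable_prodMk_left
  have hgi : ∀ ω, Integrable (fun y => g (ω, y)) (κ ω) := fun ω =>
    Integrable.of_bound (hgω ω).aestronglyMeasurable 1 (Filter.Eventually.of_forall fun y => hg1 _)
  let b : α → E := fun ω => ∫ y, g (ω, y) ∂(κ ω)
  have hb : Measurable b := (hg.stronglyMeasurable.integral_kernel_prod_right').measurable
  have hbin : ∀ ω h, ⟪h, b ω⟫_ℝ = ∫ y, ⟪h, g (ω, y)⟫_ℝ ∂(κ ω) := fun ω h =>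
    (integral_inner (hgi ω) h).symm
  -- The expected shortfall of the portfolio `h`; it vanishes iff the payoff is nonnegative a.s.
  let G : α → E → ℝ := fun ω h => ∫ y, max (-⟪h, g (ω, y)⟫_ℝ) 0 ∂(κ ω)
  have hneg_le : ∀ x h, max (-⟪h, g x⟫_ℝ) 0 ≤ ‖h‖ := fun x h => by
    refine max_le ((neg_le_abs _).trans ((abs_real_inner_le_norm _ _).trans ?_)) (norm_nonneg _)
    exact mul_le_of_le_one_right (norm_nonneg _) (hg1 x)
  have hnm : ∀ h, Measurable fun x => max (-⟪h, g x⟫_ℝ) 0 := fun h =>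
    ((measurable_const.inner hg).neg).max measurable_const
  have hni : ∀ ω h, Integrable (fun y => max (-⟪h, g (ω, y)⟫_ℝ) 0) (κ ω) := fun ω h =>
    Integrable.of_bound ((hnm h).comp measurable_prodMk_left).aestronglyMeasurable ‖h‖
      (Filter.Eventually.of_forall fun y => by
        rw [Real.norm_of_nonneg (le_max_right _ _)]; exact hneg_le _ h)
  have hGm : ∀ h, Measurable fun ω => G ω h := fun h =>
    ((hnm h).stronglyMeasurable.integral_kernel_prod_right').measurable
  have hG0 : ∀ ω h, 0 ≤ G ω h := fun ω h => integral_nonneg fun y => le_max_right _ _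
  have hGiff : ∀ ω h, G ω h = 0 ↔ ∀ᵐ y ∂(κ ω), 0 ≤ ⟪h, g (ω, y)⟫_ℝ := fun ω h => by
    refine (integral_eq_zero_iff_of_nonneg (fun y => le_max_right _ _) (hni ω h)).trans
      (Filter.eventually_congr (Filter.Eventually.of_forall fun y => ?_))
    simp
  have hGc : ∀ ω, Continuous (G ω) := fun ω => by
    refine continuous_iff_continuousAt.2 fun h₀ => ?_
    refine continuousAt_of_dominated (bound := fun _ => ‖h₀‖ + 1)
      (Filter.Eventually.of_forall fun h => (hni ω h).aestronglyMeasurable) ?_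
      (integrable_const _) (Filter.Eventually.of_forall fun y => ?_)
    · filter_upwards [Metric.ball_mem_nhds h₀ one_pos] with h hh
      refine Filter.Eventually.of_forall fun y => ?_
      rw [Real.norm_of_nonneg (le_max_right _ _)]
      refine (hneg_le _ h).trans ?_
      have h1 : ‖h - h₀‖ < 1 := mem_ball_iff_norm.1 hh
      have h2 := norm_le_norm_add_norm_sub' h h₀
      linarith
    · fun_prop
  have hconv : ∀ ω, Convex ℝ {h | G ω h = 0} := fun ω x hx y hy s t hs ht _ => by
    simp only [Set.mem_ofPred_eq, hGiff] at hx hy ⊢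
    filter_upwards [hx, hy] with z h1 h2
    rw [inner_add_left, real_inner_smul_left, real_inner_smul_left]
    positivity
  have hzero : ∀ ω, G ω 0 = 0 := fun ω => by simp [hGiff]
  have hproj : ∀ ω, ∃ p, G ω p = 0 ∧ ∀ h, G ω h = 0 → ⟪b ω - p, h - p⟫_ℝ ≤ 0 := fun ω => by
    obtain ⟨p, hpK, hp⟩ := exists_norm_eq_iInf_of_complete_convex (K := {h | G ω h = 0})
      ⟨0, hzero ω⟩ (isClosed_singleton.preimage (hGc ω)).isComplete (hconv ω) (b ω)
    exact ⟨p, hpK, (norm_eq_iInf_iff_real_inner_le_zero (hconv ω) hpK).1 hp⟩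
  choose p hpG hp using hproj
  refine ⟨p, measurable_projection hb hGm hGc hG0 hp hpG, fun ω => ⟨(hGiff ω _).1 (hpG ω), ?_, ?_⟩⟩
  · intro h0
    have h1 : ⟪p ω, b ω⟫_ℝ = 0 := by
      rw [hbin, integral_congr_ae (g := fun _ => (0 : ℝ)) h0, integral_zero]
    -- The variational inequality at `0` reads `‖p ω‖ ^ 2 ≤ ⟪p ω, b ω⟫`.
    have h2 := hp ω 0 (hzero ω)
    have h3 : ⟪b ω - p ω, 0 - p ω⟫_ℝ = ‖p ω‖ ^ 2 - ⟪p ω, b ω⟫_ℝ := by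
      rw [zero_sub, inner_neg_right, inner_sub_left, real_inner_self_eq_norm_sq,
        real_inner_comm]
      ring
    have h4 : ‖p ω‖ ^ 2 ≤ 0 := by linarith
    exact norm_eq_zero.1 (pow_eq_zero_iff two_ne_zero |>.1 (le_antisymm h4 (sq_nonneg _)))
  · intro h0 h hh
    have h1 := hp ω h ((hGiff ω h).2 hh)
    rw [h0, sub_zero, sub_zero, real_inner_comm, hbin] at h1
    have hi : Integrable (fun y => ⟪h, g (ω, y)⟫_ℝ) (κ ω) := (hgi ω).const_inner h
    exact (integral_eq_zero_iff_of_nonneg_ae hh hi).1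
      (le_antisymm h1 (integral_nonneg_of_ae hh))

/-! ### Geometry of the conditional support at a fixed history -/

/-- By second countability, a random vector lies in the support of its law almost surely. -/
lemma ae_mem_support_of_law {β E : Type*} [MeasurableSpace β] [TopologicalSpace E]
    [SecondCountableTopology E] [MeasurableSpace E] [BorelSpace E] (μ : Measure β)
    [IsProbabilityMeasure μ] {f : β → E} (hf : Measurable f) :
    ∀ᵐ y ∂μ, f y ∈ ⋂₀ {A : Set E | IsClosed A ∧ μ {y | f y ∈ A} = 1} := by
  obtain ⟨T, hTc, hTS, hT⟩ := TopologicalSpace.isOpen_sUnion_countable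
    {U : Set E | IsOpen U ∧ μ {y | f y ∈ Uᶜ} = 1} (fun U hU => hU.1)
  have hae : ∀ᵐ y ∂μ, ∀ U ∈ T, f y ∈ Uᶜ := by
    rw [ae_ball_iff hTc]
    intro U hU
    exact (mem_ae_iff_prob_eq_one (hf (hTS hU).1.isClosed_compl.measurableSet)).2 (hTS hU).2
  filter_upwards [hae] with y hy A hA
  by_contra hyA
  have h1 : f y ∈ ⋃₀ {U : Set E | IsOpen U ∧ μ {y | f y ∈ Uᶜ} = 1} :=
    ⟨Aᶜ, ⟨hA.1.isOpen_compl, by rw [compl_compl]; exact hA.2⟩, hyA⟩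
  rw [← hT] at h1
  obtain ⟨U, hU, hyU⟩ := h1
  exact hy U hU hyU

/-- Absence of one-period arbitrage, in the sense that a nonnegative payoff vanishes, forces the
affine hull of the support to contain `0`: otherwise its point closest to `0` has a payoff that is a.s.
bounded below by a positive constant. -/
lemma zero_mem_affineSpan_support {β E : Type*} [MeasurableSpace β] [NormedAddCommGroup E]
    [InnerProductSpace ℝ E] [FiniteDimensional ℝ E] [MeasurableSpace E] [BorelSpace E]
    (μ : Measure β) [IsProbabilityMeasure μ] {f : β → E} (hf : Measurable f)
    (hna : ∀ h, (∀ᵐ y ∂μ, 0 ≤ ⟪h, f y⟫_ℝ) → ∀ᵐ y ∂μ, ⟪h, f y⟫_ℝ = 0) :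
    (0 : E) ∈ affineSpan ℝ (⋂₀ {A : Set E | IsClosed A ∧ μ {y | f y ∈ A} = 1}) := by
  have : ProperSpace E := FiniteDimensional.proper ℝ E
  have hK := ae_mem_support_of_law μ hf
  set D := affineSpan ℝ (⋂₀ {A : Set E | IsClosed A ∧ μ {y | f y ∈ A} = 1}) with hD
  have hDae : ∀ᵐ y ∂μ, f y ∈ D := hK.mono fun y hy => subset_affineSpan ℝ _ hy
  obtain ⟨y₀, hy₀⟩ := hDae.exists
  obtain ⟨p, hpD, hp⟩ := exists_norm_eq_iInf_of_complete_convex (K := (D : Set E))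
    ⟨_, hy₀⟩ (AffineSubspace.closed_of_finiteDimensional D).isComplete D.convex 0
  have hvar := (norm_eq_iInf_iff_real_inner_le_zero D.convex hpD).1 hp
  have hge : ∀ᵐ y ∂μ, ‖p‖ ^ 2 ≤ ⟪p, f y⟫_ℝ := hDae.mono fun y hy => by
    have := hvar _ hy
    rw [zero_sub, inner_neg_left, inner_sub_right, real_inner_self_eq_norm_sq] at this
    linarith
  obtain ⟨y, h1, h2⟩ := (hge.and (hna p (hge.mono fun y hy => (sq_nonneg _).trans hy))).exists
  have hp0 : p = 0 := norm_eq_zero.1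
    (pow_eq_zero_iff two_ne_zero |>.1 (le_antisymm (h2 ▸ h1) (sq_nonneg _)))
  exact hp0 ▸ hpD

/-- A vector of the affine hull of the support that is a.s. orthogonal to the random vector is
orthogonal to the whole hull, hence to itself. -/
lemma eq_zero_of_mem_affineSpan_support {β E : Type*} [MeasurableSpace β] [NormedAddCommGroup E]
    [InnerProductSpace ℝ E] [MeasurableSpace E] [BorelSpace E]
    (μ : Measure β) [IsProbabilityMeasure μ] {f : β → E} (hf : Measurable f) {h : E}
    (hh : h ∈ affineSpan ℝ (⋂₀ {A : Set E | IsClosed A ∧ μ {y | f y ∈ A} = 1}))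
    (h0 : ∀ᵐ y ∂μ, ⟪h, f y⟫_ℝ = 0) : h = 0 := by
  have hcl : IsClosed {x : E | ⟪h, x⟫_ℝ = 0} :=
    isClosed_eq (continuous_const.inner continuous_id) continuous_const
  have hsub : ⋂₀ {A : Set E | IsClosed A ∧ μ {y | f y ∈ A} = 1} ⊆
      ((ℝ ∙ h)ᗮ.toAffineSubspace : Set E) := fun x hx => by
    have hx' : ⟪h, x⟫_ℝ = 0 :=
      hx _ ⟨hcl, (mem_ae_iff_prob_eq_one (hf hcl.measurableSet)).1 h0⟩
    exact Submodule.mem_orthogonal_singleton_iff_inner_right.2 hx'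
  have h1 : h ∈ (ℝ ∙ h)ᗮ := affineSpan_le.2 hsub hh
  exact inner_self_eq_zero.1 (Submodule.mem_orthogonal_singleton_iff_inner_right.1 h1)

/-! ### From the multi-period market to a single period -/

section Market

lemma measurable_deltaS {S : ∀ t, Hist Ωs t → Evec d} (hS : ∀ t, Measurable (S t)) (t : ℕ) :
    Measurable fun x : Hist Ωs t × Ωs (t + 1) => deltaS S t x.1 x.2 :=
  Measurable.sub (hS (t + 1)) ((hS t).comp measurable_fst)

lemma measurable_Vval {S φ : ∀ t, Hist Ωs t → Evec d} (hS : ∀ t, Measurable (S t))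
    (hφ : ∀ t, Measurable (φ t)) (x : ℝ) : ∀ t, Measurable (Vval S φ x t)
  | 0 => measurable_const
  | t + 1 => by
    have h1 : Measurable fun ω : Hist Ωs t × Ωs (t + 1) =>
        Vval S φ x t ω.1 + ⟪φ t ω.1, deltaS S t ω.1 ω.2⟫_ℝ :=
      ((measurable_Vval hS hφ x t).comp measurable_fst).add
        (((hφ t).comp measurable_fst).inner (measurable_deltaS hS t))
    exact h1

variable (q : ∀ t, Kernel (Hist Ωs t) (Ωs (t + 1))) [∀ t, IsMarkovKernel (q t)]

/-- `P_{t+1}` is the composition-product of `P_t` and the kernel `q_{t+1}`. -/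
lemma Pmes_succ (t : ℕ) [SFinite (Pmes q t)] :
    Pmes q (t + 1) = (Pmes q t ⊗ₘ q t : Measure (Hist Ωs t × Ωs (t + 1))) := by
  have hm : Measurable fun ω : Hist Ωs t => ((q t) ω).map (Prod.mk ω) := by
    refine Measure.measurable_of_measurable_coe _ fun s hs => ?_
    simp_rw [Measure.map_apply measurable_prodMk_left hs]
    exact Kernel.measurable_kernel_prodMk_left hs
  refine Measure.ext fun s hs => ?_
  have hcomp : (Pmes q t ⊗ₘ q t) s = ∫⁻ ω, (q t) ω (Prod.mk ω ⁻¹' s) ∂(Pmes q t) :=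
    Measure.compProd_apply hs
  refine (Measure.bind_apply hs hm.aemeasurable).trans (Eq.trans ?_ hcomp.symm)
  exact lintegral_congr fun ω => Measure.map_apply measurable_prodMk_left hs

lemma isProbabilityMeasure_Pmes : ∀ t, IsProbabilityMeasure (Pmes q t)
  | 0 => Measure.dirac.isProbabilityMeasure
  | t + 1 => by
    have := isProbabilityMeasure_Pmes t
    rw [Pmes_succ]
    exact inferInstanceAs (IsProbabilityMeasure (Pmes q t ⊗ₘ q t))

lemma ae_Pmes_succ_iff (t : ℕ) {R : Hist Ωs (t + 1) → Prop} (hR : MeasurableSet {ω | R ω}) :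
    (∀ᵐ ω ∂(Pmes q (t + 1)), R ω) ↔
      ∀ᵐ ω ∂(Pmes q t), ∀ᵐ y ∂(q t ω), R ((ω, y) : Hist Ωs t × Ωs (t + 1)) := by
  have := isProbabilityMeasure_Pmes q t
  rw [Pmes_succ]
  exact Measure.ae_compProd_iff hR

/-- If no trading takes place after time `t + 1`, almost sure statements about the wealth at a later
time `s` are statements about the wealth at time `t + 1`. -/
lemma ae_Vval_iff {S φ : ∀ t, Hist Ωs t → Evec d} (hS : ∀ t, Measurable (S t))
    (hφ : ∀ t, Measurable (φ t)) {t : ℕ} (h0 : ∀ s, t < s → φ s = 0) {M : Set ℝ}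
    (hM : MeasurableSet M) {s : ℕ} (hs : t + 1 ≤ s) :
    (∀ᵐ ω ∂(Pmes q s), Vval S φ 0 s ω ∈ M) ↔
      ∀ᵐ ω ∂(Pmes q (t + 1)), Vval S φ 0 (t + 1) ω ∈ M := by
  induction s, hs using Nat.le_induction with
  | base => rfl
  | succ s hs ih =>
    rw [← ih, ae_Pmes_succ_iff q s (measurable_Vval hS hφ 0 (s + 1) hM)]
    refine Filter.eventually_congr (Filter.Eventually.of_forall fun ω => ?_)
    have hV : ∀ y, Vval S φ 0 (s + 1) ((ω, y) : Hist Ωs s × Ωs (s + 1)) = Vval S φ 0 s ω :=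
      fun y => by simp [Vval, h0 s hs]
    simp only [hV]
    exact Filter.eventually_const

lemma Vval_eq_zero {Γ : ℕ → Type} {S φ : ∀ t, Hist Γ t → Evec d} {t : ℕ} (h0 : ∀ s, s < t → φ s = 0) :
    ∀ s, s ≤ t → ∀ ω, Vval S φ 0 s ω = 0
  | 0, _, _ => rfl
  | s + 1, hs, ω => by
    have := Vval_eq_zero (S := S) h0 s (by omega) ω.1
    simp [Vval, this, h0 s (by omega)]

/-- (NA) passes to each single period: trading only over the period after time `t`, a portfolio
with conditionally nonnegative payoff has conditionally vanishing payoff. -/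
lemma NAcond.one_period {q : ∀ t, Kernel (Hist Ωs t) (Ωs (t + 1))} [∀ t, IsMarkovKernel (q t)]
    {S : ∀ t, Hist Ωs t → Evec d} (hS : ∀ t, Measurable (S t)) {T : ℕ} (hNA : NAcond q S T)
    {t : ℕ} (ht : t + 1 ≤ T) {p : Hist Ωs t → Evec d} (hp : Measurable p)
    (hp0 : ∀ ω, ∀ᵐ y ∂(q t ω), 0 ≤ ⟪p ω, deltaS S t ω y⟫_ℝ) :
    ∀ᵐ ω ∂(Pmes q t), ∀ᵐ y ∂(q t ω), ⟪p ω, deltaS S t ω y⟫_ℝ = 0 := by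
  classical
  let φ : ∀ s, Hist Ωs s → Evec d := Function.update 0 t p
  have hφt : φ t = p := Function.update_self _ _ _
  have hφne : ∀ s, s ≠ t → φ s = 0 := fun s hs => Function.update_of_ne hs _ _
  have hφ : ∀ s, Measurable (φ s) := fun s => by
    by_cases h : s = t
    · subst h; rwa [hφt]
    · rw [hφne s h]; exact measurable_const
  have hV : ∀ (ω : Hist Ωs t) y, Vval S φ 0 (t + 1) ((ω, y) : Hist Ωs t × Ωs (t + 1)) =
      ⟪p ω, deltaS S t ω y⟫_ℝ := fun ω y => by
    have := Vval_eq_zero (S := S) (fun s hs => hφne s hs.ne) t le_rfl ω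
    simp [Vval, this, hφt]
  have key : ∀ M : Set ℝ, MeasurableSet M → ((∀ᵐ ω ∂(Pmes q T), Vval S φ 0 T ω ∈ M) ↔
      ∀ᵐ ω ∂(Pmes q t), ∀ᵐ y ∂(q t ω), ⟪p ω, deltaS S t ω y⟫_ℝ ∈ M) := fun M hM => by
    rw [ae_Vval_iff q hS hφ (fun s hs => hφne s hs.ne') hM ht,
      ae_Pmes_succ_iff q t (measurable_Vval hS hφ 0 (t + 1) hM)]
    simp only [hV]
  exact (key {0} (measurableSet_singleton 0)).1 (hNA φ hφ
    ((key (Set.Ici 0) measurableSet_Ici).2 (Filter.Eventually.of_forall hp0)))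

end Market

/-- Under (NA), for every `0 ≤ t ≤ T−1` there is a full-measure set
`Ω^t_{NA1} ∈ ℱ_t` on which: (i) `0 ∈ D^{t+1}(ω^t)` (so `D^{t+1}(ω^t)` is a vector
subspace); (ii) for every `h ∈ ℝ^d`, `q_{t+1}(h·ΔS ≥ 0|ω^t) = 1` implies
`q_{t+1}(h·ΔS = 0|ω^t) = 1`; (iii) for every `h ∈ D^{t+1}(ω^t)`,
`q_{t+1}(h·ΔS ≥ 0|ω^t) = 1` implies `h = 0`. -/
theorem local_no_arbitrage_characterization
    (q : ∀ t, Kernel (Hist Ωs t) (Ωs (t + 1))) [∀ t, IsMarkovKernel (q t)]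
    (S : ∀ t, Hist Ωs t → Evec d) (hS : ∀ t, Measurable (S t))
    (T : ℕ) (hNA : NAcond q S T) (t : ℕ) (ht : t + 1 ≤ T) :
    ∃ A : Set (Hist Ωs t), MeasurableSet[histMS Ωs t] A ∧ Pmes q t A = 1 ∧
      ∀ ω ∈ A,
        ((0 : Evec d) ∈ Dset q S t ω ∧
          ∃ W : Submodule ℝ (Evec d), (W : Set (Evec d)) = Dset q S t ω) ∧
        (∀ h : Evec d, (q t) ω {y | 0 ≤ ⟪h, deltaS S t ω y⟫_ℝ} = 1 →
          (q t) ω {y | ⟪h, deltaS S t ω y⟫_ℝ = 0} = 1) ∧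
        (∀ h ∈ Dset q S t ω, (q t) ω {y | 0 ≤ ⟪h, deltaS S t ω y⟫_ℝ} = 1 → h = 0) := by
  have hΔ := measurable_deltaS hS t
  have hΔω : ∀ ω, Measurable (deltaS S t ω) := fun ω => hΔ.comp measurable_prodMk_left
  -- Rescaling by a positive factor makes the increment bounded without affecting the signs of the
  -- payoffs.
  let g : Hist Ωs t × Ωs (t + 1) → Evec d := fun x =>
    (1 + ‖deltaS S t x.1 x.2‖)⁻¹ • deltaS S t x.1 x.2
  have hg : Measurable g := ((hΔ.norm.const_add 1).inv).smul hΔ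
  have hg1 : ∀ x, ‖g x‖ ≤ 1 := fun x => by
    have h1 : 0 < 1 + ‖deltaS S t x.1 x.2‖ := by positivity
    rw [norm_smul, norm_inv, Real.norm_of_nonneg h1.le, inv_mul_le_one₀ h1]
    linarith
  have hgin : ∀ h ω y, ⟪h, g (ω, y)⟫_ℝ = (1 + ‖deltaS S t ω y‖)⁻¹ * ⟪h, deltaS S t ω y⟫_ℝ :=
    fun h ω y => real_inner_smul_right _ _ _
  have hpos : ∀ ω y, 0 < (1 + ‖deltaS S t ω y‖)⁻¹ := fun ω y => by positivity
  have hg_nonneg : ∀ h ω y, 0 ≤ ⟪h, g (ω, y)⟫_ℝ ↔ 0 ≤ ⟪h, deltaS S t ω y⟫_ℝ := fun h ω y => by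
    rw [hgin, mul_nonneg_iff_of_pos_left (hpos ω y)]
  have hg_zero : ∀ h ω y, ⟪h, g (ω, y)⟫_ℝ = 0 ↔ ⟪h, deltaS S t ω y⟫_ℝ = 0 := fun h ω y => by
    rw [hgin, mul_eq_zero_iff_left (hpos ω y).ne']
  obtain ⟨p, hpm, hp⟩ := exists_measurable_candidate (q t) hg hg1
  simp only [hg_nonneg, hg_zero] at hp
  have hA : MeasurableSet {ω | p ω = 0} := hpm (measurableSet_singleton 0)
  have := isProbabilityMeasure_Pmes q t
  refine ⟨{ω | p ω = 0}, hA, ?_, fun ω hω => ?_⟩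
  · refine (mem_ae_iff_prob_eq_one hA).1 ?_
    filter_upwards [hNA.one_period hS ht hpm fun ω => (hp ω).1] with ω hω
    exact (hp ω).2.1 hω
  · have hin : ∀ h, Measurable fun y => ⟪h, deltaS S t ω y⟫_ℝ := fun h =>
      measurable_const.inner (hΔω ω)
    have hge : ∀ h, (q t) ω {y | 0 ≤ ⟪h, deltaS S t ω y⟫_ℝ} = 1 →
        ∀ᵐ y ∂(q t ω), 0 ≤ ⟪h, deltaS S t ω y⟫_ℝ := fun h =>
      (mem_ae_iff_prob_eq_one (hin h measurableSet_Ici)).2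
    have hna := (hp ω).2.2 hω
    have h0 : (0 : Evec d) ∈ affineSpan ℝ (suppK q S t ω) :=
      zero_mem_affineSpan_support (q t ω) (hΔω ω) hna
    refine ⟨⟨h0, Submodule.span ℝ (suppK q S t ω), ?_⟩, fun h hh => ?_, fun h hD hh => ?_⟩
    · rw [← affineSpan_insert_zero, affineSpan_insert_eq_affineSpan ℝ h0]
      rfl
    · exact (mem_ae_iff_prob_eq_one (hin h (measurableSet_singleton 0))).1 (hna h (hge h hh))
    · exact eq_zero_of_mem_affineSpan_support (q t ω) (hΔω ω) hD (hna h (hge h hh))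
end
end

section
/- Under the one-period assumptions (quantitative no-arbitrage with constant α ∈ (0,1]; V a random utility; asymptotic elasticity with constants γ̄ ≥ 0, K > 0 and integrable C ≥ 0; and E V⁺(·, 1 + h·Y) < ∞ for all h ∈ 𝓗_1): the set Graph(𝒟) := {(x,h) ∈ [0,∞) × ℝ^d : h ∈ D_x} is a closed subset of ℝ × ℝ^d, and the function ψ : ℝ × ℝ^d → ℝ ∪ {±∞} defined by ψ(x,h) := E V(·, x + h·Y(·)) for (x,h) ∈ Graph(𝒟) and ψ(x,h) := −∞ otherwise, is upper semicontinuous on ℝ × ℝ^d and satisfies ψ < +∞ on Graph(𝒟). -/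
/-!
The heart of the proof is a locally uniform integrable bound for `V⁺(x + h·Y)` on the graph
(`exists_dominating`). Choose a basis `b₁, …, b_k` of the span of `𝓗_1` consisting of elements of
`𝓗_1`. If `|h| ≤ R`, the coordinates `c_i` of `h` are bounded by some `M`, and since
`b_i·Y ≥ -1` almost surely, `c_i b_i·Y = c_i (b_i·Y + 1) - c_i ≤ M (b_i·Y + 2)`. Summing over `i`,
`x + h·Y ≤ A (2k + 2 + ∑ b_i·Y)` with `A = R + M`, which is `2A(2k + 2) (1/2 + g·Y)` for
`g = ∑ b_i / (2(2k + 2)) ∈ 𝓗_1`. Asymptotic elasticity then bounds `V⁺(x + h·Y)` by a multiple of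
`V⁺(1 + g·Y) + C`, which is integrable. In particular `ψ < ∞` on the graph.

The graph is closed because an almost sure inequality passes to limits of sequences and affine
subspaces of `ℝ^d` are closed. Upper semicontinuity of `ψ` is Fatou's lemma for the negative parts
and the reverse Fatou lemma, with the bound above, for the positive parts. Measurability of
`V(·, x + h·Y)` follows from right-continuity of the monotone usc map `V(ω, ·)`.
-/

open MeasureTheory ProbabilityTheory Set
open scoped ENNReal InnerProductSpace

noncomputable section

/-- The positive part of an extended real, as an element of `[0,∞]`. -/
def ePos (x : EReal) : ℝ≥0∞ := if x = ⊤ then ⊤ else ENNReal.ofReal x.toReal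

/-- The generalised integral `∫ f dμ := ∫ f⁺ dμ − ∫ f⁻ dμ` of an extended-real valued
function, with values in `ℝ ∪ {±∞}`. -/
def geint {α : Type*} [MeasurableSpace α] (μ : Measure α) (f : α → EReal) : EReal :=
  ((∫⁻ a, ePos (f a) ∂μ : ℝ≥0∞) : EReal) - ((∫⁻ a, ePos (-f a) ∂μ : ℝ≥0∞) : EReal)

variable {d : ℕ} {Ω : Type*} [MeasurableSpace Ω]

/-- The support of the law of `Y` under `Q`: the intersection of all closed sets `A`
with `Q(Y ∈ A) = 1`. -/
def suppY (Q : Measure Ω) (Y : Ω → Evec d) : Set (Evec d) :=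
  ⋂₀ {A : Set (Evec d) | IsClosed A ∧ Q (Y ⁻¹' A) = 1}

/-- `D`: the smallest affine subspace of `ℝ^d` containing the support of the law of `Y`. -/
def Dv (Q : Measure Ω) (Y : Ω → Evec d) : Set (Evec d) :=
  (affineSpan ℝ (suppY Q Y) : Set (Evec d))

/-- `𝓗_x := {h ∈ ℝ^d : Q(x + h·Y ≥ 0) = 1}`. -/
def Hx (Q : Measure Ω) (Y : Ω → Evec d) (x : ℝ) : Set (Evec d) :=
  {h | Q {ω | 0 ≤ x + ⟪h, Y ω⟫_ℝ} = 1}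

/-- `D_x := 𝓗_x ∩ D`. -/
def Dx (Q : Measure Ω) (Y : Ω → Evec d) (x : ℝ) : Set (Evec d) := Hx Q Y x ∩ Dv Q Y

/-- The graph `{(x,h) : x ≥ 0, h ∈ D_x}` of the set-valued map `x ↦ D_x`. -/
def GraphD (Q : Measure Ω) (Y : Ω → Evec d) : Set (ℝ × Evec d) :=
  {p | 0 ≤ p.1 ∧ p.2 ∈ Dx Q Y p.1}

open Classical in
/-- `ψ(x,h) = E V(·, x + h·Y)` on the graph, `−∞` elsewhere. -/
def psiF (Q : Measure Ω) (Y : Ω → Evec d) (V : Ω → ℝ → EReal) : ℝ × Evec d → EReal :=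
  fun p => if p ∈ GraphD Q Y then geint Q (fun ω => V ω (p.1 + ⟪p.2, Y ω⟫_ℝ)) else ⊥

theorem ePos_eq : ePos = EReal.toENNReal := rfl

theorem ePos_mono : Monotone ePos := fun _ _ h => EReal.toENNReal_le_toENNReal h

theorem ePos_continuous : Continuous ePos := EReal.continuous_toENNReal

theorem ePos_measurable : Measurable ePos := measurable_ereal_toENNReal

theorem mem_Hx_iff (Q : Measure Ω) [IsProbabilityMeasure Q] (Y : Ω → Evec d) (hY : Measurable Y)
    (x : ℝ) (h : Evec d) : h ∈ Hx Q Y x ↔ ∀ᵐ ω ∂Q, 0 ≤ x + ⟪h, Y ω⟫_ℝ := by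
  have hm : MeasurableSet {ω | 0 ≤ x + ⟪h, Y ω⟫_ℝ} :=
    measurableSet_le measurable_const (measurable_const.add (measurable_const.inner hY))
  exact (mem_ae_iff_prob_eq_one hm).symm

theorem isClosed_GraphD (Q : Measure Ω) [IsProbabilityMeasure Q] (Y : Ω → Evec d)
    (hY : Measurable Y) : IsClosed (GraphD Q Y) := by
  have hD : IsClosed (Dv Q Y) := AffineSubspace.closed_of_finiteDimensional _
  refine IsSeqClosed.isClosed fun u p hu hup => ?_
  have h1 : Filter.Tendsto (fun n => (u n).1) Filter.atTop (nhds p.1) :=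
    (continuous_fst.tendsto p).comp hup
  have h2 : Filter.Tendsto (fun n => (u n).2) Filter.atTop (nhds p.2) :=
    (continuous_snd.tendsto p).comp hup
  refine ⟨ge_of_tendsto' h1 fun n => (hu n).1, ?_, hD.mem_of_tendsto h2 (.of_forall fun n => (hu n).2.2)⟩
  rw [mem_Hx_iff Q Y hY]
  have hall : ∀ᵐ ω ∂Q, ∀ n, 0 ≤ (u n).1 + ⟪(u n).2, Y ω⟫_ℝ :=
    ae_all_iff.2 fun n => (mem_Hx_iff Q Y hY _ _).1 (hu n).2.1
  filter_upwards [hall] with ω hω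
  exact ge_of_tendsto' (h1.add (h2.inner tendsto_const_nhds)) hω

/-- Composition of a monotone usc random function with a random variable is measurable:
`{V(ω, z ω) < c}` is the union over rational `q` of `{z ω < q} ∩ {V(ω, q) < c}`. -/
theorem measurable_comp_usc (V : Ω → ℝ → EReal) (hVmeas : ∀ x : ℝ, Measurable fun ω => V ω x)
    (hVmono : ∀ ω, Monotone (V ω)) (hVusc : ∀ ω, UpperSemicontinuous (V ω))
    (z : Ω → ℝ) (hz : Measurable z) : Measurable fun ω => V ω (z ω) := by
  refine measurable_of_Iio fun c => ?_
  have : (fun ω => V ω (z ω)) ⁻¹' Iio c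
      = ⋃ q : ℚ, {ω | z ω < (q : ℝ)} ∩ {ω | V ω (q : ℝ) < c} := by
    ext ω
    simp only [mem_preimage, mem_Iio, mem_iUnion, mem_inter_iff, mem_ofPred_eq]
    constructor
    · intro h
      obtain ⟨ε, hε, hb⟩ := Metric.eventually_nhds_iff.1 (hVusc ω (z ω) c h)
      obtain ⟨q, hq1, hq2⟩ := exists_rat_btwn (show z ω < z ω + ε by linarith)
      refine ⟨q, hq1, hb ?_⟩
      rw [Real.dist_eq, abs_lt]
      constructor <;> linarith
    · rintro ⟨q, h1, h2⟩
      exact (hVmono ω h1.le).trans_lt h2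
  rw [this]
  exact MeasurableSet.iUnion fun q =>
    (measurableSet_lt hz measurable_const).inter (measurableSet_lt (hVmeas q) measurable_const)

theorem ePos_elasticity {v w : EReal} {k c : ℝ} (hk : 0 ≤ k)
    (h : v ≤ (k : EReal) * (w + (c : EReal))) :
    ePos v ≤ ENNReal.ofReal k * (ePos w + ENNReal.ofReal c) := by
  refine (ePos_mono h).trans ?_
  simp only [ePos_eq]
  rw [EReal.toENNReal_mul (by exact_mod_cast hk), EReal.real_coe_toENNReal]
  gcongr
  exact EReal.toENNReal_add_le

/-- Every `(x, h)` in the graph with `x ≤ R`, `|h| ≤ R` satisfies `x + h·Y ≤ l (1/2 + g·Y)` for a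
single strategy `g ∈ 𝓗_1` and constant `l`, almost surely. -/
theorem exists_dominating_strategy (Q : Measure Ω) [IsProbabilityMeasure Q] (Y : Ω → Evec d)
    (hY : Measurable Y) (R : ℝ) (hR : 1 ≤ R) :
    ∃ g ∈ Hx Q Y 1, ∃ l : ℝ, 1 ≤ l ∧ ∀ p ∈ GraphD Q Y, p.1 ≤ R → ‖p.2‖ ≤ R →
      ∀ᵐ ω ∂Q, p.1 + ⟪p.2, Y ω⟫_ℝ ≤ l * (1 / 2 + ⟪g, Y ω⟫_ℝ) := by
  obtain ⟨S, hS, hspan, hli⟩ := exists_linearIndependent ℝ (Hx Q Y 1)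
  have : Finite S := LinearIndependent.finite hli
  have : Fintype S := Fintype.ofFinite S
  let W : Submodule ℝ (Evec d) := Submodule.span ℝ (range ((↑) : S → Evec d))
  let b : Module.Basis S ℝ W := Module.Basis.span hli
  let L : W →L[ℝ] (S → ℝ) := LinearMap.toContinuousLinearMap b.equivFun.toLinearMap
  have hb : ∀ i, (b i : Evec d) = i := fun i =>
    congrArg Subtype.val (Module.Basis.span_apply hli i)
  have hS' : ∀ᵐ ω ∂Q, ∀ i : S, 0 ≤ 1 + ⟪(i : Evec d), Y ω⟫_ℝ :=
    ae_all_iff.2 fun i => (mem_Hx_iff Q Y hY _ _).1 (hS i.2)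
  let k : ℝ := Fintype.card S
  have hk : 0 ≤ k := Nat.cast_nonneg _
  let M : ℝ := ‖L‖ * R
  have hM : 0 ≤ M := by positivity
  let m : ℝ := 2 * (2 * k + 2)
  have hm : 4 ≤ m := by simp only [m]; linarith
  have hsum : ∀ ω, (∑ i : S, ⟪(i : Evec d), Y ω⟫_ℝ) = (∑ i : S, (1 + ⟪(i : Evec d), Y ω⟫_ℝ)) - k := by
    intro ω
    simp [Finset.sum_add_distrib, k]
  have hg : ∀ ω, ⟪m⁻¹ • ∑ i : S, (i : Evec d), Y ω⟫_ℝ = m⁻¹ * ∑ i : S, ⟪(i : Evec d), Y ω⟫_ℝ := by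
    intro ω
    rw [real_inner_smul_left, sum_inner]
  refine ⟨m⁻¹ • ∑ i : S, (i : Evec d), ?_, (R + M) * m, by nlinarith, ?_⟩
  · rw [mem_Hx_iff Q Y hY]
    filter_upwards [hS'] with ω hω
    have h0 := Finset.sum_nonneg fun i (_ : i ∈ Finset.univ) => hω i
    rw [hg, hsum]
    have : 0 ≤ m⁻¹ * (m + (∑ i : S, (1 + ⟪(i : Evec d), Y ω⟫_ℝ) - k)) := by
      apply mul_nonneg (by positivity)
      simp only [m]; linarith
    rwa [mul_add, inv_mul_cancel₀ (by linarith)] at this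
  · rintro ⟨x, h⟩ ⟨hx0, hxH, -⟩ hxR hhR
    simp only at hx0 hxH hxR hhR ⊢
    have hR0 : 0 < R := by linarith
    have hhW : h ∈ W := by
      have h1 : R⁻¹ • h ∈ Hx Q Y 1 := by
        rw [mem_Hx_iff Q Y hY] at hxH ⊢
        filter_upwards [hxH] with ω hω
        rw [real_inner_smul_left]
        have : 0 ≤ R⁻¹ * (R + ⟪h, Y ω⟫_ℝ) := mul_nonneg (by positivity) (by linarith)
        rwa [mul_add, inv_mul_cancel₀ hR0.ne'] at this
      have h2 : R⁻¹ • h ∈ W := by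
        simp only [W, Subtype.range_coe, hspan]
        exact Submodule.subset_span h1
      have h3 := W.smul_mem R h2
      rwa [smul_smul, mul_inv_cancel₀ hR0.ne', one_smul] at h3
    let c : S → ℝ := L ⟨h, hhW⟩
    have hc : ∀ i, |c i| ≤ M := fun i => calc
      |c i| ≤ ‖c‖ := norm_le_pi_norm c i
      _ ≤ ‖L‖ * ‖(⟨h, hhW⟩ : W)‖ := L.le_opNorm _
      _ ≤ M := mul_le_mul_of_nonneg_left hhR (norm_nonneg L)
    have hh : h = ∑ i, c i • (i : Evec d) := by
      have := congrArg (Subtype.val) (b.sum_equivFun ⟨h, hhW⟩)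
      simp only [Submodule.coe_sum, Submodule.coe_smul, hb] at this
      exact this.symm
    filter_upwards [hS'] with ω hω
    have h0 := Finset.sum_nonneg fun i (_ : i ∈ Finset.univ) => hω i
    have hin : ⟪h, Y ω⟫_ℝ ≤ ∑ i : S, M * ((1 + ⟪(i : Evec d), Y ω⟫_ℝ) + 1) := by
      conv_lhs => rw [hh, sum_inner]
      refine Finset.sum_le_sum fun i _ => ?_
      rw [real_inner_smul_left]
      have h1 := abs_le.1 (hc i)
      nlinarith [mul_le_mul_of_nonneg_right h1.2 (hω i)]
    rw [← Finset.mul_sum, Finset.sum_add_distrib] at hin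
    simp only [Finset.sum_const, Finset.card_univ, nsmul_eq_mul, mul_one] at hin
    change _ ≤ M * (_ + k) at hin
    rw [hg, hsum]
    set s := ∑ i : S, (1 + ⟪(i : Evec d), Y ω⟫_ℝ)
    have e : (R + M) * m * (1 / 2 + m⁻¹ * (s - k)) = (R + M) * (k + 2 + s) := by
      have hm0 : m * m⁻¹ = 1 := mul_inv_cancel₀ (by linarith)
      have : (R + M) * m * (1 / 2 + m⁻¹ * (s - k))
        = (R + M) * (m / 2 + (m * m⁻¹) * (s - k)) := by ring
      rw [this, hm0]; simp only [m]; ring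
    rw [e]
    nlinarith [mul_nonneg hR0.le hk, mul_nonneg hR0.le h0]

/-- Locally uniform integrable domination of `V⁺(x + h·Y)` on the graph. -/
theorem exists_dominating (Q : Measure Ω) [IsProbabilityMeasure Q] (Y : Ω → Evec d)
    (hY : Measurable Y) (V : Ω → ℝ → EReal) (hVmono : ∀ ω, Monotone (V ω))
    (γ K : ℝ) (hK : 0 < K)
    (C : Ω → ℝ) (hCmeas : Measurable C) (hCint : Integrable C Q)
    (hAE : ∀ ω, ∀ lam x : ℝ, 1 ≤ lam →
      V ω (lam * x) ≤ ((K * lam ^ γ : ℝ) : EReal) * (V ω (x + 1 / 2) + (C ω : EReal)))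
    (hInt1 : ∀ h ∈ Hx Q Y 1, ∫⁻ ω, ePos (V ω (1 + ⟪h, Y ω⟫_ℝ)) ∂Q < ⊤)
    (R : ℝ) (hR : 1 ≤ R) :
    ∃ G : Ω → ℝ≥0∞, ∫⁻ ω, G ω ∂Q ≠ ⊤ ∧ ∀ p ∈ GraphD Q Y, p.1 ≤ R → ‖p.2‖ ≤ R →
      ∀ᵐ ω ∂Q, ePos (V ω (p.1 + ⟪p.2, Y ω⟫_ℝ)) ≤ G ω := by
  obtain ⟨g, hg, l, hl, hdom⟩ := exists_dominating_strategy Q Y hY R hR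
  have hk : 0 ≤ K * l ^ γ := by positivity
  refine ⟨fun ω => ENNReal.ofReal (K * l ^ γ) *
    (ePos (V ω (1 + ⟪g, Y ω⟫_ℝ)) + ENNReal.ofReal (C ω)), ?_, fun p hp h1 h2 => ?_⟩
  · rw [lintegral_const_mul' _ _ ENNReal.ofReal_ne_top,
      lintegral_add_right _ hCmeas.ennreal_ofReal]
    exact ENNReal.mul_ne_top ENNReal.ofReal_ne_top
      (ENNReal.add_ne_top.2 ⟨(hInt1 g hg).ne, hCint.lintegral_lt_top.ne⟩)
  · filter_upwards [hdom p hp h1 h2] with ω hω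
    refine (ePos_mono (hVmono ω hω)).trans (ePos_elasticity hk ?_)
    convert hAE ω l (1 / 2 + ⟪g, Y ω⟫_ℝ) hl using 4
    ring

theorem le_sub_of_limsup_le_of_le_liminf {a b : ℕ → ℝ≥0∞} {A B : ℝ≥0∞} {y : EReal}
    (ha : Filter.limsup a Filter.atTop ≤ A) (hb : B ≤ Filter.liminf b Filter.atTop) (hA : A ≠ ⊤)
    (hy : ∀ n, y ≤ (a n : EReal) - (b n : EReal)) : y ≤ (A : EReal) - (B : EReal) := by
  rw [sub_eq_add_neg]
  refine EReal.le_add_of_forall_gt (.inl (EReal.coe_ennreal_ne_bot _))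
    (.inl (by simpa using hA)) fun a' ha' b' hb' => ?_
  have h1 : ∀ᶠ n in Filter.atTop, (a n : EReal) < a' := by
    have h0 : 0 ≤ a' := (EReal.coe_ennreal_nonneg A).trans ha'.le
    rw [gt_iff_lt, ← EReal.coe_toENNReal h0, EReal.coe_ennreal_lt_coe_ennreal_iff] at ha'
    filter_upwards [Filter.eventually_lt_of_limsup_lt (ha.trans_lt ha')] with n hn
    rwa [← EReal.coe_toENNReal h0, EReal.coe_ennreal_lt_coe_ennreal_iff]
  have h2 : ∀ᶠ n in Filter.atTop, -(b n : EReal) < b' := by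
    have hb'' : -b' < B := EReal.neg_lt_comm.1 hb'
    rcases lt_or_ge (-b') 0 with h0 | h0
    · exact .of_forall fun n => EReal.neg_lt_comm.1 (h0.trans_le (EReal.coe_ennreal_nonneg _))
    · rw [← EReal.coe_toENNReal h0, EReal.coe_ennreal_lt_coe_ennreal_iff] at hb''
      filter_upwards [Filter.eventually_lt_of_lt_liminf (hb''.trans_le hb)] with n hn
      rw [EReal.neg_lt_comm, ← EReal.coe_toENNReal h0, EReal.coe_ennreal_lt_coe_ennreal_iff]
      exact hn
  obtain ⟨n, hn1, hn2⟩ := (h1.and h2).exists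
  refine (hy n).trans ?_
  rw [sub_eq_add_neg]
  exact add_le_add hn1.le hn2.le

/-- Reverse Fatou lemma for the generalised integral: a lower bound `y` of all `∫ f n` is a lower
bound of `∫ F` when `limsup f n ≤ F` and the positive parts are dominated. -/
theorem le_geint_of_limsup_le (Q : Measure Ω) {f : ℕ → Ω → EReal} {F : Ω → EReal}
    (hf : ∀ n, Measurable (f n)) {G : Ω → ℝ≥0∞} (hG : ∫⁻ ω, G ω ∂Q ≠ ⊤)
    (hfG : ∀ n, ∀ᵐ ω ∂Q, ePos (f n ω) ≤ G ω) (hFG : ∀ᵐ ω ∂Q, ePos (F ω) ≤ G ω)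
    (hlim : ∀ ω, ∀ c, F ω < c → ∀ᶠ n in Filter.atTop, f n ω < c)
    {y : EReal} (hy : ∀ n, y ≤ geint Q (f n)) : y ≤ geint Q F := by
  have hls : ∀ ω, Filter.limsup (fun n => f n ω) Filter.atTop ≤ F ω := fun ω =>
    (Filter.limsup_le_iff).2 fun c hc => hlim ω c hc
  refine le_sub_of_limsup_le_of_le_liminf ?_ ?_
    ((lintegral_mono_ae hFG).trans_lt hG.lt_top).ne hy
  · refine (limsup_lintegral_le G (fun n => ePos_measurable.comp (hf n)) hfG hG).trans
      (lintegral_mono fun ω => ?_)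
    have := ePos_mono.map_limsup_of_continuousAt (F := Filter.atTop) (fun n => f n ω)
      ePos_continuous.continuousAt
    exact this.symm.le.trans (ePos_mono (hls ω))
  · refine le_trans (lintegral_mono fun ω => ?_)
      (lintegral_liminf_le fun n => ePos_measurable.comp (hf n).neg)
    have hanti : Antitone fun v : EReal => ePos (-v) :=
      fun _ _ h => ePos_mono (EReal.neg_le_neg_iff.2 h)
    have := hanti.map_limsup_of_continuousAt (F := Filter.atTop) (fun n => f n ω)
      (ePos_continuous.comp continuous_neg).continuousAt
    exact (hanti (hls ω)).trans this.le

/-- Under the one-period assumptions, `Graph(𝒟)` is closed in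
`ℝ × ℝ^d`, the function `ψ` is upper semicontinuous on `ℝ × ℝ^d`, and `ψ < +∞` on
`Graph(𝒟)`. -/
theorem graph_closed_and_psi_usc
    (Q : Measure Ω) [IsProbabilityMeasure Q] (Y : Ω → Evec d) (hY : Measurable Y)
    (h0D : (0 : Evec d) ∈ Dv Q Y)
    (α : ℝ) (hα : α ∈ Set.Ioc (0 : ℝ) 1)
    (hNA : ∀ h ∈ Dv Q Y, ENNReal.ofReal α ≤ Q {ω | ⟪h, Y ω⟫_ℝ ≤ -α * ‖h‖})
    (V : Ω → ℝ → EReal)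
    (hVmeas : ∀ x : ℝ, Measurable fun ω => V ω x)
    (hVmono : ∀ ω, Monotone (V ω))
    (hVusc : ∀ ω, UpperSemicontinuous (V ω))
    (hVneg : ∀ ω, ∀ x : ℝ, x < 0 → V ω x = ⊥)
    (γ K : ℝ) (hγ : 0 ≤ γ) (hK : 0 < K)
    (C : Ω → ℝ) (hCmeas : Measurable C) (hC0 : ∀ ω, 0 ≤ C ω) (hCint : Integrable C Q)
    (hAE : ∀ ω, ∀ lam x : ℝ, 1 ≤ lam →
      V ω (lam * x) ≤ ((K * lam ^ γ : ℝ) : EReal) * (V ω (x + 1 / 2) + (C ω : EReal)))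
    (hInt1 : ∀ h ∈ Hx Q Y 1, ∫⁻ ω, ePos (V ω (1 + ⟪h, Y ω⟫_ℝ)) ∂Q < ⊤)
 :
    IsClosed (GraphD Q Y) ∧ UpperSemicontinuous (psiF Q Y V) ∧
      ∀ p ∈ GraphD Q Y, psiF Q Y V p < ⊤ := by
  have hcl := isClosed_GraphD Q Y hY
  have hdom := exists_dominating Q Y hY V hVmono γ K hK C hCmeas hCint hAE hInt1
  refine ⟨hcl, fun p y hy => ?_, fun p hp => ?_⟩
  · by_contra hcon
    obtain ⟨u, hup, hu⟩ := Filter.exists_seq_forall_of_frequently (Filter.not_eventually.1 hcon)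
    have huy : ∀ n, y ≤ psiF Q Y V (u n) := fun n => not_lt.1 (hu n)
    -- `y > ψ(p) ≥ -∞`, so the sequence stays in the graph.
    have hug : ∀ n, u n ∈ GraphD Q Y := by
      intro n
      by_contra hn
      have h1 := huy n
      rw [psiF, if_neg hn] at h1
      exact not_lt_bot (hy.trans_le h1)
    have hpg : p ∈ GraphD Q Y := hcl.mem_of_tendsto hup (.of_forall hug)
    obtain ⟨r, hr⟩ := (Metric.isBounded_range_of_tendsto u hup).exists_norm_le
    have hpr : ‖p‖ ≤ r := le_of_tendsto' hup.norm fun n => hr _ (mem_range_self n)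
    have hbd : ∀ q : ℝ × Evec d, ‖q‖ ≤ r → q.1 ≤ max 1 r ∧ ‖q.2‖ ≤ max 1 r := fun q hq =>
      ⟨((le_abs_self _).trans ((norm_fst_le q).trans hq)).trans (le_max_right _ _),
        ((norm_snd_le q).trans hq).trans (le_max_right _ _)⟩
    obtain ⟨G, hG, hGdom⟩ := hdom (max 1 r) (le_max_left _ _)
    refine hy.not_ge ?_
    rw [psiF, if_pos hpg]
    refine le_geint_of_limsup_le Q
      (f := fun n ω => V ω ((u n).1 + ⟪(u n).2, Y ω⟫_ℝ)) (fun n => ?_) hG (fun n => ?_)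
      (hGdom p hpg (hbd p hpr).1 (hbd p hpr).2) (fun ω c hc => ?_) (fun n => ?_)
    · exact measurable_comp_usc V hVmeas hVmono hVusc _
        (measurable_const.add (measurable_const.inner hY))
    · have := hbd (u n) (hr _ (mem_range_self n))
      exact hGdom (u n) (hug n) this.1 this.2
    · have hcont : Continuous fun q : ℝ × Evec d => q.1 + ⟪q.2, Y ω⟫_ℝ := by fun_prop
      exact ((hcont.tendsto p).comp hup).eventually (hVusc ω _ c hc)
    · have h1 := huy n
      rwa [psiF, if_pos (hug n)] at h1
  · obtain ⟨G, hG, hGdom⟩ := hdom (max 1 ‖p‖) (le_max_left _ _)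
    have h1 := hGdom p hp
      (((le_abs_self _).trans (norm_fst_le p)).trans (le_max_right _ _))
      ((norm_snd_le p).trans (le_max_right _ _))
    have h2 := (lintegral_mono_ae h1).trans_lt hG.lt_top
    rw [psiF, if_pos hp, geint, sub_eq_add_neg]
    refine EReal.add_lt_top (by simpa using h2.ne) ?_
    rw [Ne, EReal.neg_eq_top_iff]
    exact EReal.coe_ennreal_ne_bot _
end
end
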